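/- Let H ≥ 1, L ≥ 1, and n ≥ 1, and let G be the grid network with vertex set ([H] × [L]) ∪ {s, t}, edges between (i,j) and (i',j') whenever |i−i'| + |j−j'| = 1, an edge from s to (i,1) for every i ∈ [H], and an edge from (i,L) to t for every i ∈ [H], with source s and sink t. Then: (i) maxflow(G) = H; (ii) the minimum of H_G^{(n)} over labelings of G equals (n−1)·H; and (iii) the number of labelings attaining this minimum equals the Fuss–Catalan number FC_{n,L} = (1/(Ln+1))·binom(Ln + n, n). -/

import Mathlib

/-!
A minimal labeling is constant on columns and geodesic along rows. The edges of the grid split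
into `H` horizontal source-sink paths and the vertical edges. By the triangle inequality each
horizontal path contributes at least `d(id, γ) = n - 1`; equality for the whole labeling forces
every row to be a geodesic and every vertical edge to join equal labels
(`hamiltonian_decomp`). The maximum flow is `H` because the rows are edge-disjoint paths and only
`H` edges leave the source (`maxflow_grid`).

It remains to count geodesics `id, σ_1, …, σ_L, γ`, i.e. factorizations of `γ` into `k = L + 1`
permutations whose lengths add up. For a finite set `A` of letters let `T_A` be the operator
`(T_A f)(σ) = ∑ f(τ⁻¹ σ)` over the permutations `τ` moving only letters of `A` with
`|τ| + |τ⁻¹ σ| = |σ|`; the wanted number is `(T_univ^k δ)(γ)`. For `A = B ∪ {x}` every such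
`τ` is uniquely `(x a) τ'` with `a ∈ A` and `τ'` moving only letters of `B`, with lengths adding,
so `T_A = J T_B`, where `J` sums over the `(x a)` with `a ∈ A`, the case `a = x` being the
identity (a shifted Jucys–Murphy element). Conjugation shows that `J` and `T_B` commute, hence
`T_A^k = J^k T_B^k`. Left multiplication by a length-decreasing `(x a)` cuts the cycle of `σ`
through `x` into two arcs, so applying `J` is a convolution in the length of that cycle. By
induction on `A`, `(T_A^k δ)(σ)` is the product over the cycles of `σ` of the coefficients
`[z^m] B`, with `m` the cycle length and `B = 1 + z B^k` (`iterate_geoSum_fixing`).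

The coefficients of the powers of `B` satisfy `[z^n] B^{j+1} = [z^n] B^j + [z^{n-1}] B^{j+k}`.
They are defined by this recursion (`fuss`), from which the convolution rule `fuss_conv` and the
closed form `fuss_closed` follow by induction.
-/

/-- The number of cycles of a permutation of `Fin n`, counting fixed points as cycles. -/
def cycleCount {n : ℕ} (σ : Equiv.Perm (Fin n)) : ℕ :=
  σ.cycleType.card + (n - σ.support.card)

/-- The Cayley length `|σ| = n - c(σ)` of a permutation of `Fin n`. -/
def cayleyLength {n : ℕ} (σ : Equiv.Perm (Fin n)) : ℕ := n - cycleCount σ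

/-- The Cayley distance `d(σ, τ) = n - c(σ⁻¹ τ)` on `S_n`. -/
def cayleyDist {n : ℕ} (σ τ : Equiv.Perm (Fin n)) : ℕ := cayleyLength (σ⁻¹ * τ)

lemma cayleyDist_comm {n : ℕ} (σ τ : Equiv.Perm (Fin n)) :
    cayleyDist σ τ = cayleyDist τ σ := by
  unfold cayleyDist cayleyLength cycleCount
  rw [show τ⁻¹ * σ = (σ⁻¹ * τ)⁻¹ by group]
  rw [Equiv.Perm.cycleType_inv, Equiv.Perm.support_inv]

/-- The contribution `d(α x, α y)` of an (undirected) edge `{x, y}` to the Hamiltonian. -/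
def edgeTerm {V : Type*} {n : ℕ} (α : V → Equiv.Perm (Fin n)) : Sym2 V → ℕ :=
  Sym2.lift ⟨fun x y => cayleyDist (α x) (α y), fun _ _ => cayleyDist_comm _ _⟩

/-- The Hamiltonian `H_G^{(n)}(α) = Σ_{{x,y} ∈ E} d(α x, α y)` of a labeling of the
vertices of a graph by permutations. -/
noncomputable def hamiltonian {V : Type*} (G : SimpleGraph V) {n : ℕ}
    (α : V → Equiv.Perm (Fin n)) : ℕ :=
  ∑ᶠ e ∈ G.edgeSet, edgeTerm α e

/-- `maxflow G s t` is the maximum cardinality of a collection of pairwise edge-disjoint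
paths from `s` to `t` in `G`. -/
noncomputable def maxflow {V : Type*} (G : SimpleGraph V) (s t : V) : ℕ :=
  sSup {k | ∃ π : Fin k → G.Walk s t, (∀ i, (π i).IsPath) ∧
    ∀ i j, i ≠ j → List.Disjoint (π i).edges (π j).edges}

/-- The adjacency relation of the `H × L` grid network: grid vertices `(i, j)` are connected
when at `ℓ¹`-distance `1`, the source `Sum.inr false` is connected to the first column, and
the sink `Sum.inr true` is connected to the last column. -/
def gridRel (H L : ℕ) : ((Fin H × Fin L) ⊕ Bool) → ((Fin H × Fin L) ⊕ Bool) → Prop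
  | Sum.inl p, Sum.inl q => ((p.1 : ℤ) - (q.1 : ℤ)).natAbs + ((p.2 : ℤ) - (q.2 : ℤ)).natAbs = 1
  | Sum.inr false, Sum.inl p => (p.2 : ℕ) = 0
  | Sum.inl p, Sum.inr true => (p.2 : ℕ) = L - 1
  | _, _ => False

/-- The `H × L` grid network, with source `Sum.inr false` and sink `Sum.inr true`. -/
def gridGraph (H L : ℕ) : SimpleGraph ((Fin H × Fin L) ⊕ Bool) :=
  SimpleGraph.fromRel (gridRel H L)

/-! ### Coefficients of the powers of the Fuss–Catalan series -/

/-- The coefficient of `z ^ n` in `B ^ j`, where `B = 1 + z * B ^ k`, defined through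
`B ^ (j + 1) = B ^ j + z * B ^ (j + k)`. -/
def fuss (k : ℕ) : ℕ → ℕ → ℕ
  | _, 0 => 1
  | 0, _ + 1 => 0
  | j + 1, n + 1 => fuss k j (n + 1) + fuss k (j + k) n
termination_by j n => (n, j)

theorem fuss_zero_right (k j : ℕ) : fuss k j 0 = 1 := by
  cases j <;> simp [fuss]

/-- The rule `B ^ i * B ^ j = B ^ (i + j)`, read off at the coefficient of `z ^ n`. -/
theorem fuss_conv (k n : ℕ) : ∀ i j : ℕ,
    ∑ p ∈ Finset.HasAntidiagonal.antidiagonal n, fuss k i p.1 * fuss k j p.2 = fuss k (i + j) n := by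
  induction n with
  | zero => intro i j; simp [fuss_zero_right]
  | succ n ih =>
    intro i j
    induction i with
    | zero =>
      rw [Finset.Nat.sum_antidiagonal_succ]
      simp [fuss]
    | succ i ihi =>
      rw [Finset.Nat.sum_antidiagonal_succ] at ihi ⊢
      simp only [fuss, add_mul, Finset.sum_add_distrib, ih, fuss_zero_right] at ihi ⊢
      rw [← add_assoc, ihi, show i + 1 + j = (i + j) + 1 by ring, fuss,
        show i + k + j = i + j + k by ring]

/-- The closed form `[z ^ m] B ^ j = (j / m) * binom (k * m + j - 1, m - 1)` at `m = n + 1`. -/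
theorem fuss_closed (k n : ℕ) (hk : 1 ≤ k) : ∀ j : ℕ,
    (n + 1) * fuss k j (n + 1) = j * (k * (n + 1) + j - 1).choose n := by
  induction n with
  | zero =>
    intro j
    induction j with
    | zero => simp [fuss]
    | succ j ihj => simp [fuss, fuss_zero_right] at ihj ⊢; omega
  | succ n ih =>
    intro j
    induction j with
    | zero => simp [fuss]
    | succ j ihj =>
      rw [fuss, mul_add, ihj]
      have h1 := ih (j + k)
      obtain ⟨k, rfl⟩ : ∃ k', k = k' + 1 := ⟨k - 1, by omega⟩
      set N := (k + 1) * (n + 1 + 1) + j - 1 with hN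
      have e1 : (k + 1) * (n + 1) + (j + (k + 1)) - 1 = N := by
        rw [hN]; congr 1; ring
      have e2 : (k + 1) * (n + 1 + 1) + (j + 1) - 1 = N + 1 := by
        have : 1 ≤ (k + 1) * (n + 1 + 1) := Nat.succ_le_of_lt (by positivity)
        omega
      have e3 : N = n + (k * (n + 2) + j + 1) := by
        have : (k + 1) * (n + 1 + 1) = k * (n + 2) + n + 2 := by ring
        omega
      rw [e1] at h1
      rw [e2, Nat.choose_succ_succ]
      have h2 := Nat.choose_succ_right_eq N n
      rw [show N - n = k * (n + 2) + j + 1 by omega] at h2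
      have : (n + 1) * (j * N.choose (n + 1) + (n + 1 + 1) * fuss (k + 1) (j + (k + 1)) (n + 1))
        = (n + 1) * ((j + 1) * (N.choose n + N.choose (n + 1))) := by
        zify at *
        linear_combination ((n : ℤ) + 2) * h1 - h2
      exact Nat.eq_of_mul_eq_mul_left (Nat.succ_pos n) this

theorem fuss_eq (L n : ℕ) (hn : 1 ≤ n) :
    fuss (L + 1) 1 n = (L * n + n).choose n / (L * n + 1) := by
  obtain ⟨m, rfl⟩ : ∃ m, n = m + 1 := ⟨n - 1, by omega⟩
  have h1 := fuss_closed (L + 1) m (by omega) 1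
  have h2 := Nat.choose_succ_right_eq (L * (m + 1) + (m + 1)) m
  rw [show L * (m + 1) + (m + 1) - m = L * (m + 1) + 1 by omega] at h2
  rw [show (L + 1) * (m + 1) + 1 - 1 = L * (m + 1) + (m + 1) by
    rw [Nat.add_sub_cancel]; ring, one_mul] at h1
  symm
  apply Nat.div_eq_of_eq_mul_left (Nat.succ_pos _)
  apply Nat.eq_of_mul_eq_mul_left (Nat.succ_pos m)
  rw [← mul_assoc, Nat.succ_eq_add_one, h1, mul_comm, h2]

/-! ### Cayley length and cycle structure -/

section PermLength
open Equiv Equiv.Perm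
variable {α : Type*} [Fintype α] [DecidableEq α]

/-- The Cayley length of a permutation of a finite type: the sum of `m - 1` over the lengths `m`
of its cycles. -/
def permLen (σ : Perm α) : ℕ := (σ.cycleType.map (fun m => m - 1)).sum

/-- The multiplicative function on permutations with value `F m` on an `m`-cycle. Fixed points
contribute the factor `1`. -/
def cycleWeight (F : ℕ → ℕ) (σ : Perm α) : ℕ := (σ.cycleType.map F).prod

theorem disjoint_formPerm {β : Type*} [DecidableEq β] (l : List β) (ρ : Perm β)
    (h : ∀ a ∈ l, ρ a = a) :
    Perm.Disjoint l.formPerm ρ := by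
  intro a
  by_cases ha : a ∈ l
  · exact Or.inr (h a ha)
  · exact Or.inl (List.formPerm_apply_of_notMem ha)

theorem cycleType_formPerm_mul (l : List α) (ρ : Perm α) (hl : l.Nodup)
    (h : ∀ a ∈ l, ρ a = a) :
    (l.formPerm * ρ).cycleType = (if l.length ≤ 1 then 0 else {l.length}) + ρ.cycleType := by
  rw [(disjoint_formPerm l ρ h).cycleType_mul]
  congr 1
  split_ifs with h1
  · rw [cycleType_eq_zero, List.formPerm_eq_one_iff _ hl]; exact h1
  · rw [(List.isCycle_formPerm hl (by omega)).cycleType, List.support_formPerm_of_nodup _ hl,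
      List.toFinset_card_of_nodup hl]
    rintro x rfl; simp at h1

theorem permLen_formPerm_mul (l : List α) (ρ : Perm α) (hl : l.Nodup)
    (h : ∀ a ∈ l, ρ a = a) :
    permLen (l.formPerm * ρ) = (l.length - 1) + permLen ρ := by
  unfold permLen
  rw [cycleType_formPerm_mul l ρ hl h]
  split_ifs with h1 <;> simp; omega

theorem cycleWeight_formPerm_mul (F : ℕ → ℕ) (h0 : F 0 = 1) (h1 : F 1 = 1)
    (l : List α) (ρ : Perm α) (hl : l.Nodup) (h : ∀ a ∈ l, ρ a = a) :
    cycleWeight F (l.formPerm * ρ) = F l.length * cycleWeight F ρ := by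
  unfold cycleWeight
  rw [cycleType_formPerm_mul l ρ hl h]
  split_ifs with h2
  · have : l.length = 0 ∨ l.length = 1 := by omega
    rcases this with h | h <;> simp [h, h0, h1]
  · simp

/-- Every permutation is the cycle through `x`, written as a list starting at `x`, times a
permutation fixing all letters of that cycle. The list is `[x]` when `x` is a fixed point. -/
theorem exists_cycle_decomp (σ : Perm α) (x : α) :
    ∃ (l : List α) (ρ : Perm α), (x :: l).Nodup ∧ (∀ a ∈ x :: l, ρ a = a) ∧
      σ = (x :: l).formPerm * ρ ∧ (∀ a, σ a = a → ρ a = a) ∧ (∀ a ∈ l, σ a ≠ a) := by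
  by_cases hx : σ x = x
  · exact ⟨[], σ, by simp, by simpa using hx, by simp, fun a h => h, by simp⟩
  · have hne : toList σ x ≠ [] := by
      rw [Ne, toList_eq_nil_iff]; simpa using hx
    have hmem : ∀ a, a ∈ toList σ x → SameCycle σ x a := fun a ha => (mem_toList_iff.1 ha).1
    have hsup : ∀ a, a ∈ toList σ x → σ a ≠ a := fun a ha he => by
      have h := mem_toList_iff.1 ha
      exact hx ((h.1.apply_eq_self_iff).2 he)
    have hnd := nodup_toList σ x
    have hf := formPerm_toList σ x
    have hhead : (toList σ x).head hne = x := by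
      have := toList_getElem_zero σ x (by simpa using hx)
      rw [List.head_eq_getElem]; exact this
    obtain ⟨y, l, hyl⟩ := List.exists_cons_of_ne_nil hne
    rw [hyl] at hmem hsup hnd hf
    simp only [hyl, List.head_cons] at hhead
    subst hhead
    refine ⟨l, (cycleOf σ y)⁻¹ * σ, hnd, ?_, ?_, ?_, fun a ha => hsup a (by simp [ha])⟩
    · intro a ha
      rw [mul_apply, inv_eq_iff_eq, (hmem a ha).cycleOf_apply]
    · rw [hf]; group
    · intro a ha
      rw [mul_apply, inv_eq_iff_eq, ha]
      by_cases hs : SameCycle σ y a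
      · rw [hs.cycleOf_apply, ha]
      · rw [cycleOf_apply_of_not_sameCycle hs]

/-- Two disjoint cycles through `x` and `y` are joined into one by the transposition `(x y)`. -/
theorem formPerm_append {β : Type*} [DecidableEq β] (x y : β) (l₁ l₂ : List β)
    (h : (x :: l₁ ++ y :: l₂).Nodup) :
    (x :: l₁ ++ y :: l₂).formPerm
      = swap x y * ((x :: l₁).formPerm * (y :: l₂).formPerm) := by
  induction l₁ generalizing x with
  | nil => simp [List.formPerm_cons_cons]
  | cons a l₁ ih =>
    have hx : x ≠ a ∧ x ≠ y := by
      simp at h; tauto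
    have ha : a ≠ y := by simp at h; tauto
    have key : swap x a * swap a y = swap x y * swap x a := by
      rw [mul_swap_eq_swap_mul, swap_apply_right, swap_apply_of_ne_of_ne hx.2.symm ha.symm]
    rw [List.cons_append, List.cons_append, List.formPerm_cons_cons, ← List.cons_append,
      ih a (List.nodup_cons.1 h).2, List.formPerm_cons_cons]
    simp only [← mul_assoc]
    rw [key]

theorem swap_mul_formPerm_append {β : Type*} [DecidableEq β] (x y : β) (l₁ l₂ : List β)
    (ρ : Perm β)
    (h : (x :: l₁ ++ y :: l₂).Nodup) :
    swap x y * ((x :: l₁ ++ y :: l₂).formPerm * ρ)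
      = (x :: l₁).formPerm * ((y :: l₂).formPerm * ρ) := by
  rw [formPerm_append x y l₁ l₂ h]
  simp [mul_assoc]

/-- A transposition joining two different cycles raises the length by one. -/
theorem permLen_swap_mul_of_notMem (x y : α) (l : List α) (ρ : Perm α) (hl : (x :: l).Nodup)
    (h : ∀ a ∈ x :: l, ρ a = a) (hy : y ∉ x :: l) :
    permLen (swap x y * ((x :: l).formPerm * ρ)) = permLen ((x :: l).formPerm * ρ) + 1 := by
  obtain ⟨l', ρ', hl', hfix, rfl, hρ, hmv⟩ := exists_cycle_decomp ρ y
  have hdis : ∀ a ∈ x :: l, a ∉ y :: l' := by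
    intro a ha ha'
    rcases List.mem_cons.1 ha' with rfl | ha'
    · exact hy ha
    · exact hmv a ha' (h a ha)
  have hnd : (x :: l ++ y :: l').Nodup :=
    List.nodup_append.2 ⟨hl, hl', fun a ha b hb e => hdis a ha (e ▸ hb)⟩
  have hfix2 : ∀ a ∈ x :: l ++ y :: l', ρ' a = a := by
    intro a ha
    rcases List.mem_append.1 ha with ha | ha
    · exact hρ a (h a ha)
    · exact hfix a ha
  have e : swap x y * ((x :: l).formPerm * ((y :: l').formPerm * ρ'))
      = (x :: l ++ y :: l').formPerm * ρ' := by
    rw [← swap_mul_formPerm_append x y l l' ρ' hnd, swap_mul_self_mul]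
  rw [e, permLen_formPerm_mul _ _ hnd hfix2, permLen_formPerm_mul _ _ hl h,
    permLen_formPerm_mul _ _ hl' hfix]
  simp only [List.length_append, List.length_cons]
  omega

/-- A transposition of two letters of the same cycle lowers the length by one. -/
theorem permLen_split (x y : α) (l₁ l₂ : List α) (ρ : Perm α)
    (hl : (x :: l₁ ++ y :: l₂).Nodup) (h : ∀ a ∈ x :: l₁ ++ y :: l₂, ρ a = a) :
    permLen (swap x y * ((x :: l₁ ++ y :: l₂).formPerm * ρ)) + 1
      = permLen ((x :: l₁ ++ y :: l₂).formPerm * ρ) := by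
  rw [permLen_formPerm_mul _ _ hl h, swap_mul_formPerm_append x y l₁ l₂ ρ hl]
  have hnd := List.nodup_append.1 hl
  have h2 : ∀ a ∈ y :: l₂, ρ a = a := fun a ha => h a (List.mem_append.2 (Or.inr ha))
  have h1 : ∀ a ∈ x :: l₁, ((y :: l₂).formPerm * ρ) a = a := fun a ha => by
    rw [mul_apply, h a (List.mem_append.2 (Or.inl ha))]
    exact List.formPerm_apply_of_notMem (fun hb => hnd.2.2 a ha a hb rfl)
  rw [permLen_formPerm_mul _ _ hnd.1 h1, permLen_formPerm_mul _ _ hnd.2.1 h2]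
  simp only [List.length_append, List.length_cons]
  omega

theorem permLen_swap_mul_of_fixed (x y : α) (σ : Perm α) (hx : σ x = x) (hxy : x ≠ y) :
    permLen (swap x y * σ) = permLen σ + 1 := by
  have := permLen_swap_mul_of_notMem x y [] σ (by simp) (by simpa using hx) (by simpa using hxy.symm)
  simpa using this

theorem permLen_one : permLen (1 : Perm α) = 0 := by simp [permLen]

theorem permLen_swap (x y : α) (h : x ≠ y) : permLen (swap x y) = 1 := by
  have := permLen_swap_mul_of_fixed x y 1 rfl h
  simpa [permLen_one] using this

theorem permLen_swap_mul_le (x y : α) (σ : Perm α) :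
    permLen (swap x y * σ) ≤ permLen σ + 1 := by
  obtain ⟨l, ρ, hl, hfix, rfl, -, -⟩ := exists_cycle_decomp σ x
  by_cases hy : y ∈ x :: l
  · rcases List.mem_cons.1 hy with rfl | hy
    · rw [swap_self, ← Equiv.Perm.one_def, one_mul]
      omega
    · obtain ⟨l₁, l₂, rfl⟩ := List.append_of_mem hy
      have := permLen_split x y l₁ l₂ ρ hl hfix
      simp only [List.cons_append] at this
      omega
  · exact (permLen_swap_mul_of_notMem x y l ρ hl hfix hy).le

theorem permLen_eq_zero {σ : Perm α} : permLen σ = 0 ↔ σ = 1 := by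
  constructor
  · intro h
    rw [← cycleType_eq_zero]
    refine Multiset.eq_zero_of_forall_notMem fun m hm => ?_
    have h2 := two_le_of_mem_cycleType hm
    unfold permLen at h
    rw [Multiset.sum_eq_zero_iff] at h
    have := h (m - 1) (Multiset.mem_map_of_mem _ hm)
    omega
  · rintro rfl; exact permLen_one

theorem permLen_mul_le (σ τ : Perm α) : permLen (σ * τ) ≤ permLen σ + permLen τ := by
  induction hm : permLen σ using Nat.strong_induction_on generalizing σ with
  | _ m ih =>
    by_cases h1 : σ = 1
    · subst h1; simp
    obtain ⟨x, hx⟩ : ∃ x, σ x ≠ x := by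
      by_contra! hcon
      exact h1 (Equiv.ext hcon)
    have hfix : (swap x (σ x) * σ) x = x := by simp
    have e := permLen_swap_mul_of_fixed x (σ x) _ hfix (Ne.symm hx)
    rw [swap_mul_self_mul] at e
    have := ih _ (by omega) (swap x (σ x) * σ) rfl
    have h3 := permLen_swap_mul_le x (σ x) (swap x (σ x) * σ * τ)
    rw [mul_assoc, swap_mul_self_mul] at h3
    rw [mul_assoc] at this
    omega

theorem permLen_conj (σ τ : Perm α) : permLen (τ * σ * τ⁻¹) = permLen σ := by
  simp [permLen, cycleType_conj]

end PermLength

/-! ### Factorizations with additive lengths -/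

section GeoSum
open Equiv Equiv.Perm
variable {α : Type*} [Fintype α] [DecidableEq α]

/-- Left multiplication by `∑ i ∈ s, u i`, keeping only the products in which lengths add: the
value at `σ` is the sum of `f ((u i)⁻¹ * σ)` over the `i` with `|u i| + |(u i)⁻¹ σ| = |σ|`. -/
def geoSum {ι : Type*} (s : Finset ι) (u : ι → Perm α) (f : Perm α → ℕ) (σ : Perm α) : ℕ :=
  ∑ i ∈ s, if permLen (u i) + permLen ((u i)⁻¹ * σ) = permLen σ then f ((u i)⁻¹ * σ) else 0

/-- Subadditivity of the length makes `geoSum` compose like a graded product: the two additivity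
conditions amount to the single one `|u| + |v| + |(u v)⁻¹ σ| = |σ|`. -/
theorem geoSum_geoSum {ι κ : Type*} (s : Finset ι) (u : ι → Perm α) (t : Finset κ)
    (v : κ → Perm α) (f : Perm α → ℕ) (σ : Perm α) :
    geoSum s u (geoSum t v f) σ = ∑ p ∈ s ×ˢ t,
      if permLen (u p.1) + permLen (v p.2) + permLen ((u p.1 * v p.2)⁻¹ * σ) = permLen σ
        then f ((u p.1 * v p.2)⁻¹ * σ) else 0 := by
  rw [Finset.sum_product]
  refine Finset.sum_congr rfl fun i _ => ?_
  have h1 : permLen σ ≤ permLen (u i) + permLen ((u i)⁻¹ * σ) := by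
    simpa using permLen_mul_le (u i) ((u i)⁻¹ * σ)
  have key : ∀ j, permLen ((u i)⁻¹ * σ) ≤ permLen (v j) + permLen ((u i * v j)⁻¹ * σ) := by
    intro j
    have := permLen_mul_le (v j) ((u i * v j)⁻¹ * σ)
    simpa [mul_assoc] using this
  unfold geoSum
  split_ifs with h
  · refine Finset.sum_congr rfl fun j _ => ?_
    have := key j
    simp only [mul_inv_rev, mul_assoc] at this ⊢
    refine if_congr ?_ rfl rfl
    omega
  · symm
    refine Finset.sum_eq_zero fun j _ => ?_
    have := key j
    rw [if_neg]
    dsimp only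
    omega

/-- The permutations that move only letters of `A`. -/
def fixing (A : Finset α) : Finset (Perm α) :=
  Finset.univ.filter fun τ => ∀ a, a ∉ A → τ a = a

theorem mem_fixing {A : Finset α} {τ : Perm α} : τ ∈ fixing A ↔ ∀ a, a ∉ A → τ a = a := by
  simp [fixing]

/-- The unique factorization `τ = (x a) τ'` with `a = τ x` and `τ'` fixing `x`; lengths add. -/
theorem geoSum_fixing_insert (x : α) (B : Finset α) (hx : x ∉ B) :
    geoSum (fixing (insert x B)) id
      = geoSum (insert x B) (swap x) ∘ geoSum (fixing B) (id : Perm α → Perm α) := by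
  funext f σ
  rw [Function.comp_apply, geoSum_geoSum]
  symm
  refine Finset.sum_nbij' (fun p => swap x p.1 * p.2) (fun τ => (τ x, swap x (τ x) * τ))
    ?_ ?_ ?_ ?_ ?_
  · rintro ⟨a, τ⟩ hp
    rw [Finset.mem_product, mem_fixing] at hp
    rw [mem_fixing]
    intro b hb
    have hb' : b ≠ x ∧ b ∉ B := by simpa using hb
    have hba : b ≠ a := fun h => hb (h ▸ hp.1)
    rw [mul_apply, hp.2 b hb'.2, swap_apply_of_ne_of_ne hb'.1 hba]
  · intro τ hτ
    rw [mem_fixing] at hτ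
    rw [Finset.mem_product, mem_fixing]
    have hm : τ x ∈ insert x B := by
      by_contra hcon
      have := τ.injective (hτ _ hcon)
      rw [this] at hcon
      simp at hcon
    refine ⟨hm, fun b hb => ?_⟩
    by_cases hbx : b = x
    · subst hbx; simp
    · have hbA : b ∉ insert x B := by simp [hbx, hb]
      simp only [mul_apply]
      rw [hτ b hbA, swap_apply_of_ne_of_ne hbx (fun h => hbA (h ▸ hm))]
  · rintro ⟨a, τ⟩ hp
    rw [Finset.mem_product, mem_fixing] at hp
    have : τ x = x := hp.2 x hx
    simp [this]
  · intro τ _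
    simp
  · rintro ⟨a, τ⟩ hp
    rw [Finset.mem_product, mem_fixing] at hp
    have hτ : τ x = x := hp.2 x hx
    have : permLen (swap x a) + permLen τ = permLen (swap x a * τ) := by
      by_cases h : x = a
      · subst h; rw [swap_self, ← Equiv.Perm.one_def, one_mul, permLen_one, zero_add]
      · rw [permLen_swap_mul_of_fixed x a τ hτ h, permLen_swap x a h, add_comm]
    simp only [id, this]

/-- Conjugation by a permutation moving only letters of `B` permutes the transpositions
`(x a)` with `a ∈ insert x B`. -/
theorem geoSum_commute (x : α) (B : Finset α) (hx : x ∉ B) :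
    Function.Commute (geoSum (insert x B) (swap x))
      (geoSum (fixing B) (id : Perm α → Perm α)) := by
  intro f
  funext σ
  rw [geoSum_geoSum, geoSum_geoSum]
  have hstab : ∀ τ ∈ fixing B, ∀ a, a ∈ insert x B ↔ τ a ∈ insert x B := by
    intro τ hτ a
    rw [mem_fixing] at hτ
    constructor
    · intro ha
      by_contra hcon
      have := τ.injective (hτ _ (fun h => hcon (Finset.mem_insert_of_mem h)))
      exact hcon (this.symm ▸ ha)
    · intro ha
      by_contra hcon
      rw [hτ a (fun h => hcon (Finset.mem_insert_of_mem h))] at ha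
      exact hcon ha
  refine Finset.sum_nbij' (fun p => (p.2, p.2⁻¹ p.1)) (fun p => (p.1 p.2, p.1)) ?_ ?_ ?_ ?_ ?_
  · rintro ⟨a, τ⟩ hp
    rw [Finset.mem_product] at hp ⊢
    refine ⟨hp.2, (hstab τ hp.2 _).2 ?_⟩
    simpa using hp.1
  · rintro ⟨τ, a⟩ hp
    rw [Finset.mem_product] at hp ⊢
    exact ⟨(hstab τ hp.1 _).1 hp.2, hp.1⟩
  · rintro ⟨a, τ⟩ _
    simp
  · rintro ⟨τ, a⟩ _
    simp
  · rintro ⟨a, τ⟩ hp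
    rw [Finset.mem_product, mem_fixing] at hp
    have hτ : τ⁻¹ x = x := by
      rw [inv_eq_iff_eq]; exact (hp.2 x hx).symm
    have e : swap x a * τ = τ * swap x (τ⁻¹ a) := by
      rw [swap_mul_eq_mul_swap, hτ]
    have e2 : permLen (swap x a) = permLen (swap x (τ⁻¹ a)) := by
      rw [← permLen_conj (swap x (τ⁻¹ a)) τ, ← e]; simp
    simp only [id, e, e2, add_comm (permLen τ)]

/-- A sum over a list whose terms depend only on the position in the list. -/
theorem list_map_sum_eq_range {β : Type*} (l : List β) (h : β → ℕ) (φ : ℕ → ℕ)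
    (hh : ∀ l₁ y l₂, l = l₁ ++ y :: l₂ → h y = φ l₁.length) :
    (l.map h).sum = ∑ b ∈ Finset.range l.length, φ b := by
  induction l generalizing φ with
  | nil => simp
  | cons a l ih =>
    rw [List.map_cons, List.sum_cons, List.length_cons, Finset.sum_range_succ',
      ih (fun b => φ (b + 1)) (fun l₁ y l₂ e => by simpa using hh (a :: l₁) y l₂ (by simp [e])),
      hh [] a l rfl, add_comm]
    rfl

theorem fuss_one_succ (k n : ℕ) : fuss k 1 (n + 1) = fuss k k n := by
  rw [fuss, fuss]; simp

/-- Each application of the sum over the `(x a)` cuts an arc, empty for `a = x`, off the cycle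
through `x`. After `i` applications, a cycle with `m` letters besides `x` contributes `[z ^ m] B ^ i`. -/
theorem iterate_geoSum_swap (k : ℕ) (x : α) (B : Finset α) (hx : x ∉ B) (g : Perm α → ℕ)
    (hg : ∀ σ, g σ = if σ ∈ fixing B then cycleWeight (fuss k 1) σ else 0) (i : ℕ) :
    ∀ (l : List α) (ρ : Perm α), (x :: l).Nodup → (∀ a ∈ l, a ∈ B) →
      (∀ a ∈ x :: l, ρ a = a) → ρ ∈ fixing B →
      (geoSum (insert x B) (swap x))^[i] g ((x :: l).formPerm * ρ)
        = fuss k i l.length * cycleWeight (fuss k 1) ρ := by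
  have F1 : fuss k 1 1 = 1 := by rw [fuss_one_succ, fuss_zero_right]
  induction i with
  | zero =>
    intro l ρ hl hlB hfix hρ
    rw [Function.iterate_zero, id, hg]
    cases l with
    | nil => simp [hρ, fuss]
    | cons y l =>
      have : (x :: y :: l).formPerm * ρ ∉ fixing B := by
        intro h
        have := mem_fixing.1 h x hx
        rw [mul_apply, hfix x (by simp), List.formPerm_apply_head _ _ _ hl] at this
        subst this
        simp at hl
      rw [if_neg this, List.length_cons, fuss, zero_mul]
  | succ i ih =>
    intro l ρ hl hlB hfix hρ
    rw [Function.iterate_succ_apply']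
    set f := (geoSum (insert x B) (swap x))^[i] g with hf
    unfold geoSum
    have hsub : (x :: l).toFinset ⊆ insert x B := by
      intro a ha
      rcases List.mem_cons.1 (List.mem_toFinset.1 ha) with rfl | ha
      · simp
      · exact Finset.mem_insert_of_mem (hlB a ha)
    -- Only the letters `a` of the cycle through `x` satisfy the length condition.
    rw [← Finset.sum_subset hsub, List.sum_toFinset _ hl, List.map_cons, List.sum_cons,
      list_map_sum_eq_range l _ (fun b => fuss k i b * fuss k 1 (l.length - b)
        * cycleWeight (fuss k 1) ρ)]
    · have h0 : (swap x x : Perm α)⁻¹ * ((x :: l).formPerm * ρ) = (x :: l).formPerm * ρ := by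
        simp [← Equiv.Perm.one_def]
      rw [h0, if_pos (by rw [swap_self, ← Equiv.Perm.one_def, permLen_one, zero_add]),
        ih l ρ hl hlB hfix hρ, ← Finset.sum_mul, ← add_mul]
      congr 1
      rw [← fuss_conv k l.length i 1,
        Finset.Nat.sum_antidiagonal_eq_sum_range_succ (fun p q => fuss k i p * fuss k 1 q),
        Nat.succ_eq_add_one, Finset.sum_range_succ, Nat.sub_self, fuss_zero_right, mul_one,
        add_comm]
    · rintro l₁ y l₂ rfl
      rw [← List.cons_append] at hl hfix ⊢
      have hxy : x ≠ y := by
        rintro rfl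
        simp at hl
      have hnd := List.nodup_append.1 hl
      have h2 : ∀ a ∈ y :: l₂, ρ a = a := fun a ha => hfix a (List.mem_append.2 (Or.inr ha))
      have h1 : ∀ a ∈ x :: l₁, ((y :: l₂).formPerm * ρ) a = a := fun a ha => by
        rw [mul_apply, hfix a (List.mem_append.2 (Or.inl ha))]
        exact List.formPerm_apply_of_notMem (fun hb => hnd.2.2 a ha a hb rfl)
      rw [swap_inv, permLen_swap x y hxy,
        if_pos (by rw [add_comm]; exact permLen_split x y l₁ l₂ ρ hl hfix),
        swap_mul_formPerm_append x y l₁ l₂ ρ hl, ih l₁ _ hnd.1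
          (fun a ha => hlB a (by simp [ha])) h1,
        cycleWeight_formPerm_mul _ (fuss_zero_right k 1) F1 _ _ hnd.2.1 h2]
      · rw [mul_assoc]
        congr 3
        simp
      · rw [mem_fixing] at hρ ⊢
        intro a ha
        rw [mul_apply, hρ a ha]
        exact List.formPerm_apply_of_notMem
          (fun hb => ha (hlB a (List.mem_append.2 (Or.inr hb))))
    · intro a _ ha
      have ha' : a ∉ x :: l := fun h => ha (List.mem_toFinset.2 h)
      have hxa : x ≠ a := by
        rintro rfl
        simp at ha'
      rw [if_neg]
      rw [swap_inv, permLen_swap x a hxa, permLen_swap_mul_of_notMem x a l ρ hl hfix ha']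
      omega

theorem iterate_geoSum_fixing_eq_zero (A : Finset α) (k : ℕ) (f : Perm α → ℕ)
    (hf : ∀ σ, σ ∉ fixing A → f σ = 0) (σ : Perm α) (hσ : σ ∉ fixing A) :
    (geoSum (fixing A) id)^[k] f σ = 0 := by
  induction k generalizing σ with
  | zero => exact hf σ hσ
  | succ k ih =>
    rw [Function.iterate_succ_apply']
    refine Finset.sum_eq_zero fun τ hτ => ?_
    rw [ih, ite_self]
    intro h
    apply hσ
    rw [mem_fixing] at h hτ ⊢
    intro a ha
    have := h a ha
    rw [mul_apply, id, inv_eq_iff_eq, hτ a ha] at this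
    exact this

/-- The number of factorizations of `σ` into `k` permutations moving only letters of `A`, with
lengths adding up to that of `σ`, is the product of `[z ^ m] B` over the cycle lengths `m` of `σ`. -/
theorem iterate_geoSum_fixing (k : ℕ) (A : Finset α) : ∀ σ : Perm α,
    (geoSum (fixing A) id)^[k] (fun σ => if σ = 1 then 1 else 0) σ
      = if σ ∈ fixing A then cycleWeight (fuss k 1) σ else 0 := by
  have F1 : fuss k 1 1 = 1 := by rw [fuss_one_succ, fuss_zero_right]
  induction A using Finset.induction_on with
  | empty =>
    have hmem : ∀ σ : Perm α, σ ∈ fixing ∅ ↔ σ = 1 := by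
      intro σ
      rw [mem_fixing]
      exact ⟨fun h => Equiv.ext fun a => h a (by simp), fun h a _ => by simp [h]⟩
    have hfix : fixing (∅ : Finset α) = {1} := by
      ext σ; rw [hmem]; simp
    have hid : geoSum (fixing (∅ : Finset α)) id = id := by
      funext f σ
      simp [geoSum, hfix, permLen_one]
    intro σ
    rw [hid, Function.iterate_id, id]
    simp only [hmem]
    split_ifs with h
    · subst h; simp [cycleWeight]
    · rfl
  | insert x B hx ih =>
    intro σ
    split_ifs with hσ
    · rw [geoSum_fixing_insert x B hx, (geoSum_commute x B hx).comp_iterate, Function.comp_apply]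
      obtain ⟨l, ρ, hl, hfix, hσe, hρ, hmv⟩ := exists_cycle_decomp σ x
      rw [mem_fixing] at hσ
      have hlB : ∀ a ∈ l, a ∈ B := by
        intro a ha
        by_contra hcon
        apply hmv a ha
        apply hσ
        have : a ≠ x := by
          rintro rfl
          simp [ha] at hl
        simp [this, hcon]
      have hρB : ρ ∈ fixing B := by
        rw [mem_fixing]
        intro a ha
        by_cases hax : a = x
        · exact hfix a (by simp [hax])
        · exact hρ a (hσ a (by simp [hax, ha]))
      rw [hσe, iterate_geoSum_swap k x B hx _ ih k l ρ hl hlB hfix hρB,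
        cycleWeight_formPerm_mul _ (fuss_zero_right k 1) F1 _ _ hl hfix, List.length_cons,
        fuss_one_succ]
    · apply iterate_geoSum_fixing_eq_zero _ _ _ _ _ hσ
      intro τ hτ
      rw [if_neg]
      rintro rfl
      exact hτ (mem_fixing.2 fun a _ => rfl)

end GeoSum

/-! ### Counting geodesics from the identity to a full cycle -/

section Chains
open Equiv Equiv.Perm

theorem sum_map_pred_add_card (s : Multiset ℕ) (h : ∀ m ∈ s, 1 ≤ m) :
    (s.map (fun m => m - 1)).sum + s.card = s.sum := by
  induction s using Multiset.induction_on with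
  | empty => simp
  | cons a s ih =>
    have h1 := h a (by simp)
    have h2 := ih fun m hm => h m (by simp [hm])
    simp only [Multiset.map_cons, Multiset.sum_cons, Multiset.card_cons]
    omega

theorem cayleyLength_eq_permLen {n : ℕ} (σ : Perm (Fin n)) : cayleyLength σ = permLen σ := by
  have h1 := sum_map_pred_add_card σ.cycleType
    (fun m hm => (one_lt_of_mem_cycleType hm).le)
  rw [sum_cycleType] at h1
  have h2 : σ.support.card ≤ n := by simpa using Finset.card_le_univ σ.support
  unfold cayleyLength cycleCount permLen
  omega

theorem cayleyDist_eq {n : ℕ} (σ τ : Perm (Fin n)) : cayleyDist σ τ = permLen (σ⁻¹ * τ) :=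
  cayleyLength_eq_permLen _

theorem cayleyDist_triangle {n : ℕ} (ρ σ τ : Perm (Fin n)) :
    cayleyDist ρ τ ≤ cayleyDist ρ σ + cayleyDist σ τ := by
  simp only [cayleyDist_eq]
  have := permLen_mul_le (ρ⁻¹ * σ) (σ⁻¹ * τ)
  simpa [mul_assoc] using this

theorem cayleyDist_eq_zero {n : ℕ} {σ τ : Perm (Fin n)} : cayleyDist σ τ = 0 ↔ σ = τ := by
  rw [cayleyDist_eq, permLen_eq_zero, inv_mul_eq_one]

theorem full_cycle_facts {n : ℕ} (hn : 1 ≤ n) (γ : Perm (Fin n)) (hγ : cycleCount γ = 1) :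
    permLen γ = n - 1 ∧ ∀ F : ℕ → ℕ, F 1 = 1 → cycleWeight F γ = F n := by
  refine ⟨by rw [← cayleyLength_eq_permLen, cayleyLength, hγ], fun F hF => ?_⟩
  have h2 : γ.support.card ≤ n := by simpa using Finset.card_le_univ γ.support
  unfold cycleCount at hγ
  by_cases h1 : γ = 1
  · subst h1
    simp at hγ
    subst hγ
    simp [cycleWeight, hF]
  · have h3 : γ.cycleType.card ≠ 0 := by
      simpa using h1
    obtain ⟨m, hm⟩ := Multiset.card_eq_one.1 (show γ.cycleType.card = 1 by omega)
    have h4 := sum_cycleType γ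
    rw [hm, Multiset.sum_singleton] at h4
    have : m = n := by omega
    simp [cycleWeight, hm, this]

/-- The sequence `a, c 0, …, c (L - 1), b`, continued by the constant `b`. -/
def pathExt {X : Type*} {L : ℕ} (a : X) (c : Fin L → X) (b : X) : ℕ → X
  | 0 => a
  | j + 1 => if h : j < L then c ⟨j, h⟩ else b

/-- The total Cayley length of the path `ρ, c 0, …, c (L - 1), γ`. -/
def pathLen {n L : ℕ} (ρ : Perm (Fin n)) (c : Fin L → Perm (Fin n)) (γ : Perm (Fin n)) : ℕ :=
  ∑ j ∈ Finset.range (L + 1), cayleyDist (pathExt ρ c γ j) (pathExt ρ c γ (j + 1))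

theorem pathExt_cons {X : Type*} {L : ℕ} (a x : X) (c : Fin L → X) (b : X) (j : ℕ) :
    pathExt a (Fin.cons x c : Fin (L + 1) → X) b (j + 1) = pathExt x c b j := by
  cases j with
  | zero => simp [pathExt]
  | succ j =>
    simp only [pathExt, Nat.add_lt_add_iff_right]
    split_ifs with h
    · exact Fin.cons_succ (α := fun _ => X) x c ⟨j, h⟩
    · rfl

theorem pathLen_cons {n L : ℕ} (ρ x : Perm (Fin n)) (c : Fin L → Perm (Fin n))
    (γ : Perm (Fin n)) :
    pathLen ρ (Fin.cons x c : Fin (L + 1) → Perm (Fin n)) γ = cayleyDist ρ x + pathLen x c γ := by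
  unfold pathLen
  rw [Finset.sum_range_succ', add_comm]
  simp only [pathExt_cons]
  rfl

theorem le_pathLen {n L : ℕ} (ρ : Perm (Fin n)) (c : Fin L → Perm (Fin n)) (γ : Perm (Fin n)) :
    cayleyDist ρ γ ≤ pathLen ρ c γ := by
  induction L generalizing ρ with
  | zero => simp [pathLen, pathExt]
  | succ L ih =>
    rw [← Fin.cons_self_tail c, pathLen_cons]
    exact (cayleyDist_triangle ρ (c 0) γ).trans (Nat.add_le_add_left (ih _ _) _)

/-- The number of geodesics from `ρ` to `γ` with `L` intermediate points, obtained by peeling off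
the first step `τ = ρ⁻¹ * c 0`. -/
theorem card_geodesics {n : ℕ} (L : ℕ) (ρ γ : Perm (Fin n)) :
    (∑ c : Fin L → Perm (Fin n), if pathLen ρ c γ = cayleyDist ρ γ then 1 else 0)
      = (geoSum Finset.univ id)^[L] (fun _ => 1) (ρ⁻¹ * γ) := by
  induction L generalizing ρ with
  | zero => simp [pathLen, pathExt]
  | succ L ih =>
    rw [Function.iterate_succ_apply', geoSum,
      ← (Fin.consEquiv (fun _ : Fin (L + 1) => Perm (Fin n))).sum_comp,
      Fintype.sum_prod_type, ← Equiv.sum_comp (Equiv.mulLeft ρ)]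
    refine Finset.sum_congr rfl fun τ _ => ?_
    have e : (ρ * τ)⁻¹ * γ = τ⁻¹ * (ρ⁻¹ * γ) := by group
    have e1 : cayleyDist ρ (ρ * τ) = permLen τ := by rw [cayleyDist_eq]; simp
    have e2 : cayleyDist (ρ * τ) γ = permLen (τ⁻¹ * (ρ⁻¹ * γ)) := by rw [cayleyDist_eq, e]
    have h := ih (ρ * τ)
    rw [e, e2] at h
    have hle : ∀ c : Fin L → Perm (Fin n), permLen (τ⁻¹ * (ρ⁻¹ * γ)) ≤ pathLen (ρ * τ) c γ :=
      fun c => e2 ▸ le_pathLen (ρ * τ) c γ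
    have htri := cayleyDist_triangle ρ (ρ * τ) γ
    rw [e1, e2, cayleyDist_eq] at htri
    change (∑ c : Fin L → Perm (Fin n),
      if pathLen ρ (Fin.cons (ρ * τ) c : Fin (L + 1) → Perm (Fin n)) γ = cayleyDist ρ γ
        then 1 else 0) = _
    simp only [id, pathLen_cons, e1]
    rw [← h, cayleyDist_eq]
    split_ifs with hc
    · refine Finset.sum_congr rfl fun c _ => if_congr ?_ rfl rfl
      omega
    · refine Finset.sum_eq_zero fun c _ => if_neg ?_
      have := hle c
      omega

/-- The only summand that survives at `σ` is `τ = σ`. -/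
theorem geoSum_delta {α : Type*} [Fintype α] [DecidableEq α] :
    geoSum Finset.univ id (fun σ : Perm α => if σ = 1 then 1 else 0) = fun _ => 1 := by
  funext σ
  unfold geoSum
  rw [Finset.sum_eq_single σ]
  · simp [permLen_one]
  · intro τ _ h
    dsimp only
    rw [if_neg (show ¬ (id τ)⁻¹ * σ = 1 by rwa [id, inv_mul_eq_one]), ite_self]
  · simp

theorem ncard_geodesics {n : ℕ} (L : ℕ) (hn : 1 ≤ n) (γ : Perm (Fin n))
    (hγ : cycleCount γ = 1) :
    {c : Fin L → Perm (Fin n) | pathLen 1 c γ = n - 1}.ncard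
      = (L * n + n).choose n / (L * n + 1) := by
  obtain ⟨h1, h2⟩ := full_cycle_facts hn γ hγ
  have hd : cayleyDist 1 γ = n - 1 := by rw [cayleyDist_eq, inv_one, one_mul, h1]
  have hu : (fixing (Finset.univ : Finset (Fin n))) = Finset.univ := by
    ext; simp [mem_fixing]
  have h := card_geodesics L 1 γ
  rw [← geoSum_delta, ← Function.iterate_succ_apply, ← hu, iterate_geoSum_fixing, hu,
    if_pos (Finset.mem_univ _), inv_one, one_mul,
    h2 _ (by rw [fuss_one_succ, fuss_zero_right]), Nat.succ_eq_add_one, fuss_eq L n hn] at h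
  rw [← h, hd, Set.ncard_eq_toFinset_card', Finset.sum_boole, Nat.cast_id]
  congr 1
  ext c
  simp

end Chains

/-! ### The grid network -/

section Grid
open Equiv Equiv.Perm

/-- The vertex type of the grid network. -/
abbrev GridV (H L : ℕ) : Type := (Fin H × Fin L) ⊕ Bool

/-- The vertices of the `i`-th horizontal path: the source at position `0`, column `j` of the
grid at position `j + 1`, and the sink from position `L + 1` on. -/
def rowVertex {H L : ℕ} (i : Fin H) : ℕ → GridV H L :=
  pathExt (Sum.inr false) (fun j : Fin L => Sum.inl (i, j)) (Sum.inr true)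

/-- The position of a vertex along the horizontal direction: `0` for the source, `j + 1` for
column `j`, and `L + 1` for the sink. -/
def gridCol {H L : ℕ} : GridV H L → ℕ
  | Sum.inl p => p.2 + 1
  | Sum.inr false => 0
  | Sum.inr true => L + 1

theorem gridCol_rowVertex {H L : ℕ} (i : Fin H) (j : ℕ) (hj : j ≤ L + 1) :
    gridCol (rowVertex (L := L) i j) = j := by
  cases j with
  | zero => rfl
  | succ j =>
    simp only [rowVertex, pathExt]
    split_ifs with h
    · rfl
    · have : j = L := by omega
      simp [gridCol, this]

theorem rowVertex_adj {H L : ℕ} (hL : 1 ≤ L) (i : Fin H) (j : ℕ) (hj : j ≤ L) :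
    (gridGraph H L).Adj (rowVertex i j) (rowVertex i (j + 1)) := by
  rw [gridGraph, SimpleGraph.fromRel_adj]
  constructor
  · intro h
    have := congrArg gridCol h
    rw [gridCol_rowVertex i j (by omega), gridCol_rowVertex i (j + 1) (by omega)] at this
    omega
  · left
    cases j with
    | zero => simp [rowVertex, pathExt, show 0 < L by omega, gridRel]
    | succ j =>
      simp only [rowVertex, pathExt]
      rw [dif_pos (show j < L by omega)]
      split_ifs with h
      · simp [gridRel]
      · simp only [gridRel]; omega

theorem rowEdge_inj {H L : ℕ} (hL : 1 ≤ L) (i i' : Fin H) (j j' : ℕ) (hj : j ≤ L) (hj' : j' ≤ L)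
    (h : s(rowVertex (L := L) i j, rowVertex i (j + 1))
      = s(rowVertex i' j', rowVertex i' (j' + 1))) : i = i' ∧ j = j' := by
  have c1 := gridCol_rowVertex (L := L) i j (by omega)
  have c2 := gridCol_rowVertex (L := L) i (j + 1) (by omega)
  have c3 := gridCol_rowVertex (L := L) i' j' (by omega)
  have c4 := gridCol_rowVertex (L := L) i' (j' + 1) (by omega)
  rw [Sym2.eq_iff] at h
  rcases h with ⟨h1, h2⟩ | ⟨h1, h2⟩
  · have hjj : j = j' := by rw [← c1, h1, c3]
    subst hjj
    refine ⟨?_, rfl⟩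
    cases j with
    | zero =>
      -- The row is read off from the endpoint that is a grid vertex, using `1 ≤ L`.
      simp only [rowVertex, pathExt] at h2
      rw [dif_pos (by omega), dif_pos (by omega)] at h2
      exact congrArg Prod.fst (Sum.inl.inj h2)
    | succ j =>
      simp only [rowVertex, pathExt] at h1
      rw [dif_pos (by omega), dif_pos (by omega)] at h1
      exact congrArg Prod.fst (Sum.inl.inj h1)
  · rw [h1] at c1
    rw [h2] at c2
    omega

theorem gridRel_cases {H L : ℕ} (x y : GridV H L) (h : gridRel H L x y) :
    (∃ (i : Fin H) (j : ℕ), j ≤ L ∧ s(x, y) = s(rowVertex i j, rowVertex i (j + 1))) ∨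
    (∃ (i i' : Fin H) (j : Fin L), s(x, y) = s(Sum.inl (i, j), Sum.inl (i', j))) := by
  rcases x with ⟨i, j⟩ | (_ | _) <;> rcases y with ⟨i', j'⟩ | (_ | _) <;>
    simp only [gridRel] at h
  · by_cases hj : j = j'
    · subst hj
      exact Or.inr ⟨i, i', j, rfl⟩
    · have hj' : (j : ℕ) ≠ j' := fun h => hj (Fin.ext h)
      have hi : i = i' := Fin.ext (by omega)
      subst hi
      left
      rcases Nat.lt_or_gt_of_ne hj' with hlt | hlt
      · refine ⟨i, j + 1, by omega, ?_⟩
        have : (j' : ℕ) = j + 1 := by omega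
        simp only [rowVertex, pathExt, ← this, Fin.is_lt, dif_pos]
      · refine ⟨i, j' + 1, by omega, ?_⟩
        have : (j : ℕ) = j' + 1 := by omega
        rw [Sym2.eq_swap]
        simp only [rowVertex, pathExt, ← this, Fin.is_lt, dif_pos]
  · left
    refine ⟨i, L, le_rfl, ?_⟩
    obtain ⟨L, rfl⟩ : ∃ m, L = m + 1 := ⟨L - 1, by have := j.isLt; omega⟩
    have : j = ⟨L, Nat.lt_succ_self L⟩ := Fin.ext (by simpa using h)
    subst this
    simp [rowVertex, pathExt]
  · left
    refine ⟨i', 0, by omega, ?_⟩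
    have hL : 0 < L := by have := j'.isLt; omega
    have : j' = ⟨0, hL⟩ := Fin.ext h
    subst this
    simp [rowVertex, pathExt, hL]

/-- Every edge of the grid network lies on a horizontal path or joins two vertices of a column. -/
theorem edge_cases {H L : ℕ} (e : Sym2 (GridV H L)) (he : e ∈ (gridGraph H L).edgeSet) :
    (∃ (i : Fin H) (j : ℕ), j ≤ L ∧ e = s(rowVertex i j, rowVertex i (j + 1))) ∨
    (∃ (i i' : Fin H) (j : Fin L), e = s(Sum.inl (i, j), Sum.inl (i', j))) := by
  induction e using Sym2.ind with
  | _ x y =>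
    rw [SimpleGraph.mem_edgeSet, gridGraph, SimpleGraph.fromRel_adj] at he
    rcases he.2 with h | h
    · exact gridRel_cases x y h
    · rw [Sym2.eq_swap]; exact gridRel_cases y x h

theorem apply_rowVertex {H L n : ℕ} (α : GridV H L → Perm (Fin n)) (i : Fin H) (j : ℕ) :
    α (rowVertex i j) = pathExt (α (Sum.inr false)) (fun j => α (Sum.inl (i, j)))
      (α (Sum.inr true)) j := by
  cases j with
  | zero => rfl
  | succ j =>
    simp only [rowVertex, pathExt]
    split_ifs <;> rfl

/-- The Hamiltonian is the total length of the rows plus the contribution `R` of the vertical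
edges, and `R` vanishes exactly when vertically adjacent labels agree. -/
theorem hamiltonian_decomp {H L n : ℕ} (hL : 1 ≤ L) (α : GridV H L → Perm (Fin n)) :
    ∃ R : ℕ, hamiltonian (gridGraph H L) α = (∑ i : Fin H, pathLen (α (Sum.inr false))
        (fun j => α (Sum.inl (i, j))) (α (Sum.inr true))) + R ∧
      (R = 0 ↔ ∀ (i i' : Fin H) (j : Fin L), (i : ℕ) + 1 = i' →
        α (Sum.inl (i, j)) = α (Sum.inl (i', j))) := by
  classical
  set E := (Set.toFinite (gridGraph H L).edgeSet).toFinset with hE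
  set h : Fin H × ℕ → Sym2 (GridV H L) :=
    fun p => s(rowVertex p.1 p.2, rowVertex p.1 (p.2 + 1)) with hh
  set D : Finset (Fin H × ℕ) := Finset.univ ×ˢ Finset.range (L + 1) with hD
  have hinj : Set.InjOn h D := by
    rintro ⟨i, j⟩ hp ⟨i', j'⟩ hp' e
    simp only [hD, Finset.coe_product, Set.mem_prod, Finset.coe_range, Set.mem_Iio] at hp hp'
    obtain ⟨rfl, rfl⟩ := rowEdge_inj hL i i' j j' (by omega) (by omega) e
    rfl
  have hsub : D.image h ⊆ E := by
    intro e he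
    obtain ⟨⟨i, j⟩, hp, rfl⟩ := Finset.mem_image.1 he
    simp only [hD, Finset.mem_product, Finset.mem_range] at hp
    rw [hE, Set.Finite.mem_toFinset]
    exact rowVertex_adj hL i j (by omega)
  refine ⟨∑ e ∈ E \ D.image h, edgeTerm α e, ?_, ?_⟩
  · rw [hamiltonian, finsum_mem_eq_finite_toFinset_sum _ (Set.toFinite _), ← hE,
      ← Finset.sum_sdiff hsub, add_comm]
    congr 1
    rw [Finset.sum_image hinj, hD, Finset.sum_product]
    refine Finset.sum_congr rfl fun i _ => ?_
    unfold pathLen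
    refine Finset.sum_congr rfl fun j _ => ?_
    rw [← apply_rowVertex, ← apply_rowVertex]
    rfl
  · rw [Finset.sum_eq_zero_iff]
    constructor
    · intro hz i i' j hi
      rw [← cayleyDist_eq_zero]
      refine hz s(Sum.inl (i, j), Sum.inl (i', j)) ?_
      rw [Finset.mem_sdiff, hE, Set.Finite.mem_toFinset, SimpleGraph.mem_edgeSet, gridGraph,
        SimpleGraph.fromRel_adj]
      refine ⟨⟨?_, Or.inl ?_⟩, ?_⟩
      · intro e
        have := congrArg Prod.fst (Sum.inl.inj e)
        simp only at this
        subst this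
        omega
      · simp only [gridRel]
        omega
      · intro hm
        obtain ⟨⟨a, b⟩, hp, e⟩ := Finset.mem_image.1 hm
        simp only [hD, Finset.mem_product, Finset.mem_range] at hp
        have c1 := gridCol_rowVertex (L := L) a b (by omega)
        have c2 := gridCol_rowVertex (L := L) a (b + 1) (by omega)
        simp only [hh, Sym2.eq_iff] at e
        rcases e with ⟨e1, e2⟩ | ⟨e1, e2⟩ <;> rw [e1] at c1 <;> rw [e2] at c2 <;>
          simp only [gridCol] at c1 c2 <;> omega
    · intro hv e he
      have hcol : ∀ (j : Fin L) (m : ℕ) (hm : m < H),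
          α (Sum.inl (⟨m, hm⟩, j)) = α (Sum.inl (⟨0, by omega⟩, j)) := by
        intro j m
        induction m with
        | zero => intro _; rfl
        | succ m ih =>
          intro hm
          rw [← ih (by omega)]
          exact (hv _ _ j rfl).symm
      rw [Finset.mem_sdiff, hE, Set.Finite.mem_toFinset] at he
      rcases edge_cases e he.1 with ⟨i, j, hj, rfl⟩ | ⟨i, i', j, rfl⟩
      · exact absurd (Finset.mem_image.2 ⟨(i, j), by simp [hD]; omega, rfl⟩) he.2
      · change cayleyDist _ _ = 0
        rw [cayleyDist_eq_zero]
        exact (hcol j i i.2).trans (hcol j i' i'.2).symm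

/-- A sequence of consecutively adjacent vertices, as a walk. -/
theorem exists_walk {V : Type*} (G : SimpleGraph V) (m : ℕ) : ∀ (v : ℕ → V),
    (∀ j < m, G.Adj (v j) (v (j + 1))) →
    ∃ p : G.Walk (v 0) (v m), p.support = (List.range (m + 1)).map v ∧
      p.edges = (List.range m).map (fun j => s(v j, v (j + 1))) := by
  induction m with
  | zero => intro v _; exact ⟨SimpleGraph.Walk.nil, by simp, by simp⟩
  | succ m ih =>
    intro v hv
    obtain ⟨p, hp1, hp2⟩ := ih (fun j => v (j + 1)) (fun j hj => hv (j + 1) (by omega))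
    refine ⟨SimpleGraph.Walk.cons (hv 0 (by omega)) p, ?_, ?_⟩
    · rw [SimpleGraph.Walk.support_cons, hp1, List.range_succ_eq_map (n := m + 1)]
      simp [Function.comp_def]
    · rw [SimpleGraph.Walk.edges_cons, hp2, List.range_succ_eq_map (n := m)]
      simp [Function.comp_def]

theorem maxflow_grid (H L : ℕ) (hL : 1 ≤ L) :
    maxflow (gridGraph H L) (Sum.inr false) (Sum.inr true) = H := by
  have hub : ∀ k ∈ {k | ∃ π : Fin k → (gridGraph H L).Walk (Sum.inr false) (Sum.inr true),
      (∀ i, (π i).IsPath) ∧ ∀ i j, i ≠ j → List.Disjoint (π i).edges (π j).edges}, k ≤ H := by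
    rintro k ⟨π, -, hdisj⟩
    have hfirst : ∀ i, ∃ r : Fin H,
        s(Sum.inr false, Sum.inl (r, ⟨0, by omega⟩)) ∈ (π i).edges := by
      intro i
      generalize π i = p
      cases p with
      | @cons _ u _ hadj p =>
        rw [gridGraph, SimpleGraph.fromRel_adj] at hadj
        rcases u with ⟨r, c⟩ | (_ | _)
        · refine ⟨r, ?_⟩
          have hc : c = ⟨0, by omega⟩ := by
            have := hadj.2
            simp only [gridRel, or_false] at this
            exact Fin.ext this
          subst hc
          simp
        · simp at hadj
        · simp [gridRel] at hadj
    choose r hr using hfirst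
    have hinj : Function.Injective r := by
      intro a b hab
      by_contra hne
      refine hdisj a b hne (hr a) ?_
      rw [hab]
      exact hr b
    simpa using Fintype.card_le_of_injective r hinj
  apply le_antisymm
  · exact csSup_le' hub
  · refine le_csSup ⟨H, hub⟩ ?_
    have hw : ∀ i : Fin H, ∃ p : (gridGraph H L).Walk (Sum.inr false) (Sum.inr true),
        p.support = (List.range (L + 2)).map (rowVertex i) ∧
        p.edges = (List.range (L + 1)).map
          (fun j => s(rowVertex i j, rowVertex i (j + 1))) := by
      intro i
      have := exists_walk (gridGraph H L) (L + 1) (rowVertex i)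
        (fun j hj => rowVertex_adj hL i j (by omega))
      have e : rowVertex i (L + 1) = (Sum.inr true : GridV H L) := by simp [rowVertex, pathExt]
      rw [e] at this
      exact this
    choose π h1 h2 using hw
    refine ⟨π, fun i => ?_, fun i i' hne => ?_⟩
    · rw [SimpleGraph.Walk.isPath_def, h1]
      refine List.Nodup.map_on ?_ List.nodup_range
      intro a ha b hb hab
      rw [List.mem_range] at ha hb
      rw [← gridCol_rowVertex (L := L) i a (by omega), hab, gridCol_rowVertex i b (by omega)]
    · intro e he he'
      rw [h2, List.mem_map] at he he'
      obtain ⟨j, hj, rfl⟩ := he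
      obtain ⟨j', hj', e⟩ := he'
      rw [List.mem_range] at hj hj'
      exact hne (rowEdge_inj hL i' i j' j (by omega) (by omega) e).1.symm

/-- The labeling that gives all vertices of column `j` the label `c j`. -/
def constLabeling {H L n : ℕ} (γ : Perm (Fin n)) (c : Fin L → Perm (Fin n)) :
    GridV H L → Perm (Fin n)
  | Sum.inl p => c p.2
  | Sum.inr false => 1
  | Sum.inr true => γ

theorem hamiltonian_constLabeling {H L n : ℕ} (hL : 1 ≤ L) (γ : Perm (Fin n))
    (c : Fin L → Perm (Fin n)) :
    hamiltonian (gridGraph H L) (constLabeling γ c) = H * pathLen 1 c γ := by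
  obtain ⟨R, h1, h2⟩ := hamiltonian_decomp (H := H) hL (constLabeling γ c)
  rw [h1, h2.2 (fun i i' j _ => rfl)]
  simp [constLabeling]

theorem pathLen_const_one {n L : ℕ} (γ : Perm (Fin n)) :
    pathLen 1 (fun _ : Fin L => 1) γ = cayleyDist 1 γ := by
  induction L with
  | zero => simp [pathLen, pathExt]
  | succ L ih =>
    have : (fun _ : Fin (L + 1) => (1 : Perm (Fin n))) = Fin.cons 1 (fun _ : Fin L => 1) := by
      funext j; refine Fin.cases rfl (fun _ => rfl) j
    rw [this, pathLen_cons, ih, cayleyDist_eq_zero.2 rfl, zero_add]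

end Grid

/-- For the `H × L` grid network: the maxflow is `H`, the minimum of the Hamiltonian
`H_G^{(n)}` over labelings is `(n-1)·H`, and the number of minimizing labelings is the
Fuss–Catalan number `FC_{n,L} = (1/(Ln+1)) · binom(Ln + n, n)`. -/
theorem grid_network_flow_and_minimizers (H L n : ℕ) (hH : 1 ≤ H) (hL : 1 ≤ L) (hn : 1 ≤ n)
    (γ : Equiv.Perm (Fin n)) (hγ : cycleCount γ = 1) :
    maxflow (gridGraph H L) (Sum.inr false) (Sum.inr true) = H ∧
    sInf {Ham : ℕ | ∃ α : ((Fin H × Fin L) ⊕ Bool) → Equiv.Perm (Fin n),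
        α (Sum.inr false) = 1 ∧ α (Sum.inr true) = γ ∧
        hamiltonian (gridGraph H L) α = Ham} = (n - 1) * H ∧
    {α : ((Fin H × Fin L) ⊕ Bool) → Equiv.Perm (Fin n) |
        α (Sum.inr false) = 1 ∧ α (Sum.inr true) = γ ∧
        ∀ β : ((Fin H × Fin L) ⊕ Bool) → Equiv.Perm (Fin n),
          β (Sum.inr false) = 1 → β (Sum.inr true) = γ →
            hamiltonian (gridGraph H L) α ≤ hamiltonian (gridGraph H L) β}.ncard
      = (L * n + n).choose n / (L * n + 1) := by
  have hd : cayleyDist 1 γ = n - 1 := by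
    rw [cayleyDist_eq, inv_one, one_mul, (full_cycle_facts hn γ hγ).1]
  have hrow : ∀ c : Fin L → Equiv.Perm (Fin n), n - 1 ≤ pathLen 1 c γ :=
    fun c => hd ▸ le_pathLen 1 c γ
  have hlow : ∀ α : ((Fin H × Fin L) ⊕ Bool) → Equiv.Perm (Fin n), α (Sum.inr false) = 1 →
      α (Sum.inr true) = γ → (n - 1) * H ≤ hamiltonian (gridGraph H L) α := by
    intro α hs ht
    obtain ⟨R, h1, -⟩ := hamiltonian_decomp hL α
    rw [h1, hs, ht]
    refine le_trans ?_ (Nat.le_add_right _ _)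
    calc (n - 1) * H = ∑ _i : Fin H, (n - 1) := by simp [mul_comm]
      _ ≤ _ := Finset.sum_le_sum fun i _ => hrow _
  have hex : hamiltonian (gridGraph H L) (constLabeling γ fun _ => 1) = (n - 1) * H := by
    rw [hamiltonian_constLabeling hL, pathLen_const_one, hd, mul_comm]
  refine ⟨maxflow_grid H L hL, ?_, ?_⟩
  · apply le_antisymm
    · exact Nat.sInf_le ⟨_, rfl, rfl, hex⟩
    · refine le_csInf ⟨_, _, rfl, rfl, hex⟩ ?_
      rintro _ ⟨α, hs, ht, rfl⟩
      exact hlow α hs ht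
  · rw [← ncard_geodesics L hn γ hγ,
      ← Set.ncard_image_of_injective (f := constLabeling (H := H) γ)]
    · congr 1
      ext α
      simp only [Set.mem_ofPred_eq, Set.mem_image]
      constructor
      · rintro ⟨hs, ht, hmin⟩
        have hle := hmin _ rfl rfl |>.trans_eq hex
        obtain ⟨R, h1, h2⟩ := hamiltonian_decomp hL α
        rw [hs, ht] at h1
        have hsum : ∑ _i : Fin H, (n - 1) ≤
            ∑ i : Fin H, pathLen 1 (fun j => α (Sum.inl (i, j))) γ :=
          Finset.sum_le_sum fun i _ => hrow _
        have hconst : ∑ _i : Fin H, (n - 1) = (n - 1) * H := by simp [mul_comm]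
        have hR : R = 0 := by omega
        have heq : ∑ _i : Fin H, (n - 1) =
            ∑ i : Fin H, pathLen 1 (fun j => α (Sum.inl (i, j))) γ := by omega
        rw [Finset.sum_eq_sum_iff_of_le fun i _ => hrow _] at heq
        refine ⟨fun j => α (Sum.inl (⟨0, hH⟩, j)), (heq ⟨0, hH⟩ (Finset.mem_univ _)).symm, ?_⟩
        have hcol : ∀ (j : Fin L) (m : ℕ) (hm : m < H),
            α (Sum.inl (⟨0, hH⟩, j)) = α (Sum.inl (⟨m, hm⟩, j)) := by
          intro j m
          induction m with
          | zero => intro _; rfl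
          | succ m ih =>
            intro hm
            rw [ih (by omega)]
            exact h2.1 hR _ _ j rfl
        funext x
        rcases x with ⟨i, j⟩ | (_ | _)
        · exact hcol j i i.2
        · exact hs.symm
        · exact ht.symm
      · rintro ⟨c, hc, rfl⟩
        refine ⟨rfl, rfl, fun β hs ht => ?_⟩
        rw [hamiltonian_constLabeling hL, hc, mul_comm]
        exact hlow β hs ht
    · intro c c' h
      funext j
      exact congrFun h (Sum.inl (⟨0, hH⟩, j))
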